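/- Let $R_0$ be a commutative Noetherian domain, $\mathfrak{f} \geq 3$, $R = R_0[x_{i,j} : 1 \le i < j \le \mathfrak{f}]$, $\mathbf{X}$ the generic alternating matrix, $I = \operatorname{Pf}_4(\mathbf{X})$, $A = R/I$, and $A' = A/(x_{1,2}, x_{2,3}, x_{1,3})$. Let $N$ be the cokernel of the map $\bigwedge^3 \bar{F}^* \to \bar{F}^*$ (over $A$, with $\bar F = A^{\mathfrak{f}}$) whose matrix has columns $(0,\dots,0,x_{j,k},0,\dots,0,-x_{i,k},0,\dots,0,x_{i,j},0,\dots,0)^T$ indexed by $i<j<k$. Then there is an exact sequence of $A$-modules $0 \to N \to A^3 \xrightarrow{[x_{2,3}, -x_{1,3}, x_{1,2}]} A \to A' \to 0$, where the map $N \to A^3$ is induced by the first three rows of $-\mathbf{X}$. -/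

import Mathlib

open CategoryTheory

noncomputable section
namespace AluffiStmt

universe u

/-- The index set for the entries of a generic `f × f` alternating matrix:
pairs `(i, j)` with `i < j`. -/
abbrev P2 (f : ℕ) := {p : Fin f × Fin f // p.1 < p.2}

/-- `l` is a (weakly) regular sequence on `R`: each entry is a nonzerodivisor
modulo the ideal generated by the previous entries. -/
def IsRegSeq (R : Type*) [CommRing R] (l : List R) : Prop :=
  ∀ (i : ℕ) (h : i < l.length) (x : R),
    l.get ⟨i, h⟩ * x ∈ Ideal.span {y | y ∈ l.take i} →
      x ∈ Ideal.span {y | y ∈ l.take i}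

/-- The grade of an ideal: the supremum of lengths of regular sequences on `R`
contained in `I`. -/
def grade {R : Type*} [CommRing R] (I : Ideal R) : ℕ :=
  sSup {n | ∃ l : List R, l.length = n ∧ (∀ r ∈ l, r ∈ I) ∧ IsRegSeq R l}

/-- Projective dimension at most `n`, expressed by vanishing of `Ext^i (M, -)`
for all `i > n`. -/
def projDimLE (R : Type u) [CommRing R] (M : ModuleCat.{u} R) (n : ℕ) : Prop :=
  ∀ (N : ModuleCat.{u} R) (i : ℕ), n < i →
    Subsingleton (((Ext R (ModuleCat.{u} R) i).obj (Opposite.op M)).obj N)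

/-- `M` has projective dimension exactly `n`. -/
def projDimEq (R : Type u) [CommRing R] (M : ModuleCat.{u} R) (n : ℕ) : Prop :=
  projDimLE R M n ∧ ∀ k : ℕ, projDimLE R M k → n ≤ k

/-- An ideal `I` is perfect if `grade I = pd_R (R/I)`. -/
def IsPerfectIdeal (R : Type u) [CommRing R] (I : Ideal R) : Prop :=
  projDimEq R (ModuleCat.of R (R ⧸ I)) (grade I)
/-- The `(i,j)` entry of the generic alternating matrix `X`. -/
def xv (R₀ : Type u) [CommRing R₀] (f : ℕ) (i j : Fin f) : MvPolynomial (P2 f) R₀ :=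
  if h : i < j then MvPolynomial.X ⟨(i, j), h⟩
  else if h : j < i then - MvPolynomial.X ⟨(j, i), h⟩ else 0

/-- The Pfaffian of the principal `4 × 4` submatrix of `X` with rows and
columns `i < j < k < l`. -/
def pf4 (R₀ : Type u) [CommRing R₀] (f : ℕ) (i j k l : Fin f) : MvPolynomial (P2 f) R₀ :=
  xv R₀ f i j * xv R₀ f k l - xv R₀ f i k * xv R₀ f j l + xv R₀ f i l * xv R₀ f j k

/-- The ideal `Pf₄(X)` generated by all `4 × 4` principal Pfaffians of the
generic alternating matrix `X`. -/
def Pf4 (R₀ : Type u) [CommRing R₀] (f : ℕ) : Ideal (MvPolynomial (P2 f) R₀) :=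
  Ideal.span {p | ∃ i j k l : Fin f, i < j ∧ j < k ∧ k < l ∧ p = pf4 R₀ f i j k l}

/-- Index set of strictly increasing triples `i < j < k` in `Fin f`,
indexing a basis of `⋀³F`. -/
abbrev T3 (f : ℕ) := {v : Fin f × Fin f × Fin f // v.1 < v.2.1 ∧ v.2.1 < v.2.2}

/-- The quotient ring `A = R/Pf₄(X)`. -/
abbrev Aring (R₀ : Type u) [CommRing R₀] (f : ℕ) :=
  MvPolynomial (P2 f) R₀ ⧸ Pf4 R₀ f

/-- The image of `x_{i,j}` in `A`. -/
def xA (R₀ : Type u) [CommRing R₀] (f : ℕ) (i j : Fin f) : Aring R₀ f :=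
  Ideal.Quotient.mk _ (xv R₀ f i j)

/-- The matrix of the map `d₁ : ⋀³F* → F*`: the column indexed by the triple
`i < j < k` is `(0,…,0,x_{j,k},0,…,0,-x_{i,k},0,…,0,x_{i,j},0,…,0)ᵀ`. -/
def M1 (R₀ : Type u) [CommRing R₀] (f : ℕ) : Matrix (Fin f) (T3 f) (Aring R₀ f) :=
  fun i v =>
    if i = v.1.1 then xA R₀ f v.1.2.1 v.1.2.2
    else if i = v.1.2.1 then - xA R₀ f v.1.1 v.1.2.2
    else if i = v.1.2.2 then xA R₀ f v.1.1 v.1.2.1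
    else 0

/-! ### Standard monomials and the kernel of the Plücker map -/

/-- The (linearly ordered) index set for the variables `s_i` (first) and `t_i`. -/
abbrev Sg (f : ℕ) := Lex (Fin f ⊕ Fin f)

/-- The Plücker map `x_{i,j} ↦ s_i t_j - s_j t_i`. -/
def plu (R₀ : Type u) [CommRing R₀] (f : ℕ) :
    MvPolynomial (P2 f) R₀ →ₐ[R₀] MvPolynomial (Sg f) R₀ :=
  MvPolynomial.aeval fun p =>
    MvPolynomial.X (Sum.inlₗ p.1.1) * MvPolynomial.X (Sum.inrₗ p.1.2)
      - MvPolynomial.X (Sum.inlₗ p.1.2) * MvPolynomial.X (Sum.inrₗ p.1.1)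

lemma plu_xv (R₀ : Type u) [CommRing R₀] (f : ℕ) (i j : Fin f) :
    plu R₀ f (xv R₀ f i j) =
      MvPolynomial.X (Sum.inlₗ i) * MvPolynomial.X (Sum.inrₗ j)
      - MvPolynomial.X (Sum.inlₗ j) * MvPolynomial.X (Sum.inrₗ i) := by
  unfold xv
  split_ifs with h h'
  · simp [plu]
  · simp [plu]
  · have : i = j := le_antisymm (not_lt.mp h') (not_lt.mp h)
    subst this
    simp

lemma plu_pf4 (R₀ : Type u) [CommRing R₀] (f : ℕ) (i j k l : Fin f) :
    plu R₀ f (pf4 R₀ f i j k l) = 0 := by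
  simp only [pf4, map_add, map_sub, map_mul, plu_xv]
  ring

lemma plu_of_mem (R₀ : Type u) [CommRing R₀] (f : ℕ) {p : MvPolynomial (P2 f) R₀}
    (hp : p ∈ Pf4 R₀ f) : plu R₀ f p = 0 := by
  have : Pf4 R₀ f ≤ RingHom.ker (plu R₀ f) := by
    unfold Pf4
    rw [Ideal.span_le]
    rintro _ ⟨i, j, k, l, -, -, -, rfl⟩
    exact plu_pf4 R₀ f i j k l
  exact this hp

/-- Exponent of the leading monomial `s_i t_j` of the image of `x_{i,j}`. -/
def lexp1 {f : ℕ} (p : P2 f) : Sg f →₀ ℕ :=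
  Finsupp.single (Sum.inlₗ p.1.1) 1 + Finsupp.single (Sum.inrₗ p.1.2) 1

/-- Exponent of the leading monomial of the image of the monomial with exponent `m`. -/
def lexp {f : ℕ} (m : P2 f →₀ ℕ) : Sg f →₀ ℕ := ∑ p, m p • lexp1 p

/-- A monomial is standard if no two of its edges are strictly nested. -/
def Std {f : ℕ} (m : P2 f →₀ ℕ) : Prop :=
  ∀ p q : P2 f, m p ≠ 0 → m q ≠ 0 → p.1.1 < q.1.1 → p.1.2 ≤ q.1.2

lemma lexp_inl {f : ℕ} (m : P2 f →₀ ℕ) (i : Fin f) :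
    lexp m (Sum.inlₗ i) = ∑ p, if p.1.1 = i then m p else 0 := by
  simp [lexp, lexp1, Finsupp.finsetSum_apply, Finsupp.single_apply, Sum.inlₗ, Sum.inrₗ]

lemma lexp_inr {f : ℕ} (m : P2 f →₀ ℕ) (i : Fin f) :
    lexp m (Sum.inrₗ i) = ∑ p, if p.1.2 = i then m p else 0 := by
  simp [lexp, lexp1, Finsupp.finsetSum_apply, Finsupp.single_apply, Sum.inlₗ, Sum.inrₗ]

/-- Key step: at the first place where two exponents with the same margins differ. -/
lemma lexp_aux {f : ℕ} {m m' : P2 f →₀ ℕ} (hm : Std m) (h : lexp m = lexp m')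
    (p : P2 f) (hmin : ∀ q : P2 f, toLex q.1 < toLex p.1 → m q = m' q) (hlt : m p < m' p) :
    False := by
  have h1 : ∃ q : P2 f, q.1.1 = p.1.1 ∧ p.1.2 < q.1.2 ∧ m q ≠ 0 := by
    by_contra! hc
    have e := DFunLike.congr_fun h (Sum.inlₗ p.1.1)
    rw [lexp_inl, lexp_inl] at e
    refine absurd e (ne_of_lt (Finset.sum_lt_sum (fun q _ => ?_) ⟨p, Finset.mem_univ _, by simpa⟩))
    split_ifs with hq
    · rcases lt_trichotomy q.1.2 p.1.2 with h2 | h2 | h2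
      · exact (hmin q (by rw [Prod.Lex.toLex_lt_toLex]; exact Or.inr ⟨hq, h2⟩)).le
      · have : q = p := Subtype.ext (Prod.ext hq h2)
        rw [this]; exact hlt.le
      · rw [hc q hq h2]; exact Nat.zero_le _
    · exact le_rfl
  have h2 : ∃ q : P2 f, q.1.2 = p.1.2 ∧ p.1.1 < q.1.1 ∧ m q ≠ 0 := by
    by_contra! hc
    have e := DFunLike.congr_fun h (Sum.inrₗ p.1.2)
    rw [lexp_inr, lexp_inr] at e
    refine absurd e (ne_of_lt (Finset.sum_lt_sum (fun q _ => ?_) ⟨p, Finset.mem_univ _, by simpa⟩))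
    split_ifs with hq
    · rcases lt_trichotomy q.1.1 p.1.1 with h2 | h2 | h2
      · exact (hmin q (by rw [Prod.Lex.toLex_lt_toLex]; exact Or.inl h2)).le
      · have : q = p := Subtype.ext (Prod.ext h2 hq)
        rw [this]; exact hlt.le
      · rw [hc q hq h2]; exact Nat.zero_le _
    · exact le_rfl
  obtain ⟨q, hq1, hq2, hq3⟩ := h1
  obtain ⟨r, hr1, hr2, hr3⟩ := h2
  have := hm q r hq3 hr3 (hq1 ▸ hr2)
  rw [hr1] at this
  exact absurd hq2 (not_lt.mpr this)

lemma lexp_inj {f : ℕ} {m m' : P2 f →₀ ℕ} (hm : Std m) (hm' : Std m') (h : lexp m = lexp m') :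
    m = m' := by
  by_contra hne
  have hex : ({p : P2 f | m p ≠ m' p} : Set (P2 f)).Nonempty := by
    by_contra hc
    rw [Set.not_nonempty_iff_eq_empty, Set.eq_empty_iff_forall_notMem] at hc
    exact hne (Finsupp.ext fun p => by simpa using hc p)
  obtain ⟨p, hp, hmin⟩ := Set.exists_min_image _ (fun p : P2 f => toLex p.1)
    (Set.toFinite {p : P2 f | m p ≠ m' p}) hex
  have hmin' : ∀ q : P2 f, toLex q.1 < toLex p.1 → m q = m' q := by
    intro q hq
    by_contra hc
    exact absurd hq (not_lt.mpr (hmin q hc))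
  rcases lt_or_gt_of_ne hp with hlt | hlt
  · exact lexp_aux hm h p hmin' hlt
  · exact lexp_aux hm' h.symm p (fun q hq => (hmin' q hq).symm) hlt

lemma gen_monic (R₀ : Type u) [CommRing R₀] [Nontrivial R₀] (f : ℕ) (p : P2 f) :
    MonomialOrder.lex.Monic (plu R₀ f (MvPolynomial.X p)) ∧
    MonomialOrder.lex.degree (plu R₀ f (MvPolynomial.X p)) = lexp1 p := by
  classical
  have hX : ∀ a b : Sg f, (MvPolynomial.X a * MvPolynomial.X b : MvPolynomial (Sg f) R₀) =
      MvPolynomial.monomial (Finsupp.single a 1 + Finsupp.single b 1) 1 := by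
    intro a b
    simp [MvPolynomial.X, MvPolynomial.monomial_mul]
  have hd : ∀ a b : Sg f, MonomialOrder.lex.degree
      (MvPolynomial.X a * MvPolynomial.X b : MvPolynomial (Sg f) R₀) =
      Finsupp.single a 1 + Finsupp.single b 1 := by
    intro a b
    rw [hX, MonomialOrder.degree_monomial, if_neg one_ne_zero]
  have hlt : MonomialOrder.lex.toSyn (MonomialOrder.lex.degree
      (MvPolynomial.X (Sum.inlₗ p.1.2) * MvPolynomial.X (Sum.inrₗ p.1.1) :
        MvPolynomial (Sg f) R₀)) < MonomialOrder.lex.toSyn (MonomialOrder.lex.degree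
      (MvPolynomial.X (Sum.inlₗ p.1.1) * MvPolynomial.X (Sum.inrₗ p.1.2) :
        MvPolynomial (Sg f) R₀)) := by
    rw [hd, hd, MonomialOrder.lex_lt_iff, Finsupp.Lex.lt_iff]
    have hp := p.2
    refine ⟨Sum.inlₗ p.1.1, ?_, ?_⟩
    · intro j hj
      obtain ⟨j, rfl⟩ := toLex.surjective j
      rcases j with j | j
      · have hj' : j < p.1.1 := Sum.Lex.inl_lt_inl_iff.mp hj
        have h1 : p.1.1 ≠ j := ne_of_gt hj'
        have h2 : p.1.2 ≠ j := ne_of_gt (hj'.trans hp)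
        simp [Finsupp.single_apply, Sum.inlₗ, Sum.inrₗ, h1, h2]
      · exact absurd hj Sum.Lex.not_inr_lt_inl
    · simp [Finsupp.single_apply, Sum.inlₗ, Sum.inrₗ, hp.ne']
  have hpl : plu R₀ f (MvPolynomial.X p) =
      MvPolynomial.X (Sum.inlₗ p.1.1) * MvPolynomial.X (Sum.inrₗ p.1.2)
      - MvPolynomial.X (Sum.inlₗ p.1.2) * MvPolynomial.X (Sum.inrₗ p.1.1) := by
    simp [plu]
  constructor
  · unfold MonomialOrder.Monic
    rw [hpl, MonomialOrder.leadingCoeff_sub_of_lt hlt, hX, MonomialOrder.leadingCoeff_monomial]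
  · rw [hpl, MonomialOrder.degree_sub_of_lt hlt, hd, lexp1]

lemma plu_monomial (R₀ : Type u) [CommRing R₀] [IsDomain R₀] (f : ℕ) (m : P2 f →₀ ℕ) :
    MonomialOrder.lex.Monic (plu R₀ f (MvPolynomial.monomial m 1)) ∧
    MonomialOrder.lex.degree (plu R₀ f (MvPolynomial.monomial m 1)) = lexp m := by
  have e : plu R₀ f (MvPolynomial.monomial m 1) =
      ∏ p : P2 f, (plu R₀ f (MvPolynomial.X p)) ^ m p := by
    rw [MvPolynomial.monomial_eq, Finsupp.prod_fintype _ _ (by simp)]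
    simp
  rw [e]
  constructor
  · exact MonomialOrder.Monic.prod fun p _ => (gen_monic R₀ f p).1.pow
  · rw [MonomialOrder.degree_prod, lexp]
    · refine Finset.sum_congr rfl fun p _ => ?_
      rw [MonomialOrder.degree_pow, (gen_monic R₀ f p).2]
    · intro p _
      exact ((gen_monic R₀ f p).1.pow).ne_zero

lemma std_zero (R₀ : Type u) [CommRing R₀] [IsDomain R₀] (f : ℕ) (q : MvPolynomial (P2 f) R₀)
    (hq : ∀ d ∈ q.support, Std d) (h0 : plu R₀ f q = 0) : q = 0 := by
  by_contra hne
  obtain ⟨m, hm, hmax⟩ := Finset.exists_max_image q.support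
    (fun d => (MonomialOrder.lex (σ := Sg f)).toSyn (lexp d)) (MvPolynomial.support_nonempty.mpr hne)
  have e : plu R₀ f q = ∑ d ∈ q.support, q.coeff d • plu R₀ f (MvPolynomial.monomial d 1) := by
    conv_lhs => rw [q.as_sum]
    rw [map_sum]
    refine Finset.sum_congr rfl fun d _ => ?_
    rw [← map_smul, MvPolynomial.smul_monomial, smul_eq_mul, mul_one]
  have h1 : (plu R₀ f q).coeff (lexp m) = q.coeff m := by
    rw [e, MvPolynomial.coeff_sum, Finset.sum_eq_single m]
    · rw [MvPolynomial.coeff_smul, ← (plu_monomial R₀ f m).2, (plu_monomial R₀ f m).1.coeff_degree]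
      simp
    · intro d hd hdm
      rw [MvPolynomial.coeff_smul]
      refine (congrArg _ (MonomialOrder.coeff_eq_zero_of_lt (m := MonomialOrder.lex) ?_)).trans
        (smul_zero _)
      rw [(plu_monomial R₀ f d).2]
      refine lt_of_le_of_ne (hmax d hd) fun hc => hdm ?_
      exact lexp_inj (hq d hd) (hq m hm) ((MonomialOrder.lex (σ := Sg f)).toSyn.injective hc)
    · intro h; exact absurd hm h
  rw [h0, MvPolynomial.coeff_zero] at h1
  exact (MvPolynomial.mem_support_iff.mp hm) h1.symm

/-- Sum of squared edge lengths. -/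
def wt {f : ℕ} (m : P2 f →₀ ℕ) : ℕ := ∑ p : P2 f, m p * ((p.1.2 : ℕ) - (p.1.1 : ℕ)) ^ 2

lemma wt_add {f : ℕ} (m m' : P2 f →₀ ℕ) : wt (m + m') = wt m + wt m' := by
  simp [wt, add_mul, Finset.sum_add_distrib]

lemma wt_single {f : ℕ} (p : P2 f) :
    wt (Finsupp.single p 1) = ((p.1.2 : ℕ) - (p.1.1 : ℕ)) ^ 2 := by
  classical
  simp [wt, Finsupp.single_apply]

lemma straighten (R₀ : Type u) [CommRing R₀] (f : ℕ) (n : ℕ) : ∀ (m : P2 f →₀ ℕ), wt m = n →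
    ∃ q : MvPolynomial (P2 f) R₀, (∀ d ∈ q.support, Std d) ∧
      MvPolynomial.monomial m 1 - q ∈ Pf4 R₀ f := by
  classical
  induction n using Nat.strong_induction_on with
  | _ n ih =>
  intro m hmn
  by_cases hs : Std m
  · refine ⟨MvPolynomial.monomial m 1, fun d hd => ?_, by simp⟩
    have := MvPolynomial.support_monomial_subset hd
    rw [Finset.mem_singleton] at this
    rwa [this]
  · unfold Std at hs
    push Not at hs
    obtain ⟨⟨⟨i, l⟩, hil⟩, ⟨⟨j, k⟩, hjk⟩, hp, hq, hij, hkl⟩ := hs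
    simp only at hij hkl hil hjk
    have hik : i < k := hij.trans hjk
    have hjl : j < l := hjk.trans hkl
    set p : P2 f := ⟨(i, l), hil⟩ with hpdef
    set q : P2 f := ⟨(j, k), hjk⟩ with hqdef
    have hpq : p ≠ q := by
      intro h
      have : i = j := congrArg (fun z : P2 f => z.1.1) h
      exact hij.ne this
    obtain ⟨m', hm'⟩ : ∃ m', m = m' + (Finsupp.single p 1 + Finsupp.single q 1) := by
      refine ⟨m - (Finsupp.single p 1 + Finsupp.single q 1), (tsub_add_cancel_of_le ?_).symm⟩
      intro r
      rw [Finsupp.add_apply, Finsupp.single_apply, Finsupp.single_apply]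
      by_cases h1 : p = r
      · rw [if_pos h1, if_neg (fun h2 => hpq (h1.trans h2.symm)), ← h1]; omega
      · rw [if_neg h1]
        split_ifs with h2
        · rw [← h2]; omega
        · omega
    let c1 : P2 f := ⟨(i, k), hik⟩
    let c2 : P2 f := ⟨(j, l), hjl⟩
    let b1 : P2 f := ⟨(i, j), hij⟩
    let b2 : P2 f := ⟨(k, l), hkl⟩
    obtain ⟨a, ha⟩ : ∃ a, (j : ℕ) = i + (a + 1) := ⟨j - i - 1, by have := Fin.lt_def.mp hij; omega⟩
    obtain ⟨b, hb⟩ : ∃ b, (k : ℕ) = j + (b + 1) := ⟨k - j - 1, by have := Fin.lt_def.mp hjk; omega⟩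
    obtain ⟨c, hc⟩ : ∃ c, (l : ℕ) = k + (c + 1) := ⟨l - k - 1, by have := Fin.lt_def.mp hkl; omega⟩
    have e1 : (l : ℕ) - i = a + b + c + 3 := by omega
    have e2 : (k : ℕ) - j = b + 1 := by omega
    have e3 : (k : ℕ) - i = a + b + 2 := by omega
    have e4 : (l : ℕ) - j = b + c + 2 := by omega
    have e5 : (j : ℕ) - i = a + 1 := by omega
    have e6 : (l : ℕ) - k = c + 1 := by omega
    have w0 : wt m = wt m' + ((a + b + c + 3) ^ 2 + (b + 1) ^ 2) := by
      rw [hm', wt_add, wt_add, wt_single, wt_single]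
      simp only [hpdef, hqdef, e1, e2]
    have w1 : wt (m' + (Finsupp.single c1 1 + Finsupp.single c2 1)) < n := by
      rw [← hmn, w0, wt_add, wt_add, wt_single, wt_single]
      simp only [c1, c2, e3, e4]
      nlinarith
    have w2 : wt (m' + (Finsupp.single b1 1 + Finsupp.single b2 1)) < n := by
      rw [← hmn, w0, wt_add, wt_add, wt_single, wt_single]
      simp only [b1, b2, e5, e6]
      nlinarith
    obtain ⟨q1, hq1, hq1'⟩ := ih _ w1 _ rfl
    obtain ⟨q2, hq2, hq2'⟩ := ih _ w2 _ rfl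
    refine ⟨q1 - q2, ?_, ?_⟩
    · intro d hd
      rcases Finset.mem_union.mp (MvPolynomial.support_sub _ q1 q2 hd) with h | h
      · exact hq1 d h
      · exact hq2 d h
    · have hX : ∀ u v : P2 f, (MvPolynomial.monomial (m' + (Finsupp.single u 1 + Finsupp.single v 1)) 1
          : MvPolynomial (P2 f) R₀) =
          MvPolynomial.monomial m' 1 * (MvPolynomial.X u * MvPolynomial.X v) := by
        intro u v
        simp [MvPolynomial.X, MvPolynomial.monomial_mul]
      have hpf : pf4 R₀ f i j k l ∈ Pf4 R₀ f :=
        Ideal.subset_span ⟨i, j, k, l, hij, hjk, hkl, rfl⟩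
      have hpf' : pf4 R₀ f i j k l = MvPolynomial.X b1 * MvPolynomial.X b2
          - MvPolynomial.X c1 * MvPolynomial.X c2 + MvPolynomial.X p * MvPolynomial.X q := by
        simp only [pf4, xv, hij, hkl, hik, hjl, hil, hjk, dif_pos]
        rfl
      rw [hX] at hq1' hq2'
      rw [hm', hX]
      have := add_mem (sub_mem hq1' hq2')
        (Ideal.mul_mem_left _ (MvPolynomial.monomial m' 1) hpf)
      rw [hpf'] at this
      convert this using 1
      ring

/-- Every polynomial is standard modulo the Pfaffians. -/
lemma exists_std (R₀ : Type u) [CommRing R₀] (f : ℕ) (p : MvPolynomial (P2 f) R₀) :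
    ∃ q : MvPolynomial (P2 f) R₀, (∀ d ∈ q.support, Std d) ∧ p - q ∈ Pf4 R₀ f := by
  classical
  induction p using MvPolynomial.induction_on' with
  | monomial m a =>
    obtain ⟨q, hq, hq'⟩ := straighten R₀ f _ m rfl
    refine ⟨a • q, fun d hd => hq d (MvPolynomial.support_smul hd), ?_⟩
    have := Ideal.mul_mem_left _ (MvPolynomial.C a) hq'
    convert this using 1
    rw [mul_sub, MvPolynomial.C_mul_monomial, mul_one, MvPolynomial.smul_eq_C_mul]
  | add p q hp hq =>
    obtain ⟨p', h1, h2⟩ := hp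
    obtain ⟨q', h3, h4⟩ := hq
    refine ⟨p' + q', ?_, ?_⟩
    · intro d hd
      rcases Finset.mem_union.mp (MvPolynomial.support_add hd) with h | h
      · exact h1 d h
      · exact h3 d h
    · convert add_mem h2 h4 using 1
      ring

/-- `Pf₄(X)` is the kernel of the Plücker map. -/
lemma mem_iff (R₀ : Type u) [CommRing R₀] [IsDomain R₀] (f : ℕ) (p : MvPolynomial (P2 f) R₀) :
    p ∈ Pf4 R₀ f ↔ plu R₀ f p = 0 := by
  refine ⟨plu_of_mem R₀ f, fun h => ?_⟩
  obtain ⟨q, hq, hpq⟩ := exists_std R₀ f p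
  have h1 := plu_of_mem R₀ f hpq
  rw [map_sub, h, zero_sub, neg_eq_zero] at h1
  rw [std_zero R₀ f q hq h1, sub_zero] at hpq
  exact hpq

lemma plu_xv_ne (R₀ : Type u) [CommRing R₀] [IsDomain R₀] (f : ℕ) {i j : Fin f} (h : i < j) :
    plu R₀ f (xv R₀ f i j) ≠ 0 := by
  have : xv R₀ f i j = MvPolynomial.X ⟨(i, j), h⟩ := by simp [xv, h]
  rw [this]
  exact (gen_monic R₀ f _).1.ne_zero

/-! ### Relations in `A` -/

lemma mkA_eq_zero (R₀ : Type u) [CommRing R₀] [IsDomain R₀] (f : ℕ) (p : MvPolynomial (P2 f) R₀) :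
    (Ideal.Quotient.mk (Pf4 R₀ f) p) = 0 ↔ plu R₀ f p = 0 := by
  rw [Ideal.Quotient.eq_zero_iff_mem, mem_iff]

lemma xA_cancel (R₀ : Type u) [CommRing R₀] [IsDomain R₀] (f : ℕ) {i j : Fin f} (h : i < j)
    (a : Aring R₀ f) (ha : xA R₀ f i j * a = 0) : a = 0 := by
  obtain ⟨p, rfl⟩ := Ideal.Quotient.mk_surjective a
  rw [xA, ← map_mul, mkA_eq_zero, map_mul] at ha
  rw [mkA_eq_zero]
  exact (mul_eq_zero.mp ha).resolve_left (plu_xv_ne R₀ f h)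

lemma xA_pf (R₀ : Type u) [CommRing R₀] [IsDomain R₀] (f : ℕ) (i j k l : Fin f) :
    xA R₀ f i j * xA R₀ f k l - xA R₀ f i k * xA R₀ f j l + xA R₀ f i l * xA R₀ f j k = 0 := by
  have := (mkA_eq_zero R₀ f _).mpr (plu_pf4 R₀ f i j k l)
  simpa [pf4, xA] using this

lemma xv_anti (R₀ : Type u) [CommRing R₀] (f : ℕ) (i j : Fin f) :
    xv R₀ f j i = - xv R₀ f i j := by
  unfold xv
  rcases lt_trichotomy i j with h | h | h
  · simp [h, h.not_gt]
  · subst h; simp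
  · simp [h, h.not_gt]

lemma xv_self (R₀ : Type u) [CommRing R₀] (f : ℕ) (i : Fin f) : xv R₀ f i i = 0 := by
  simp [xv]

lemma xA_anti (R₀ : Type u) [CommRing R₀] (f : ℕ) (i j : Fin f) :
    xA R₀ f j i = - xA R₀ f i j := by
  simp [xA, xv_anti R₀ f i j]

lemma xA_self (R₀ : Type u) [CommRing R₀] (f : ℕ) (i : Fin f) : xA R₀ f i i = 0 := by
  simp [xA, xv_self]

lemma M1_apply (R₀ : Type u) [CommRing R₀] (f : ℕ) (v : T3 f) (i : Fin f) :
    M1 R₀ f i v = (if i = v.1.1 then xA R₀ f v.1.2.1 v.1.2.2 else 0)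
      + (if i = v.1.2.1 then - xA R₀ f v.1.1 v.1.2.2 else 0)
      + (if i = v.1.2.2 then xA R₀ f v.1.1 v.1.2.1 else 0) := by
  obtain ⟨⟨a, b, c⟩, h1, h2⟩ := v
  simp only at h1 h2
  have h3 := h1.trans h2
  unfold M1
  simp only
  by_cases ha : i = a
  · subst ha; simp [h1.ne, h3.ne]
  · by_cases hb : i = b
    · subst hb; simp [h1.ne', h2.ne]
    · simp [ha, hb]

lemma M1_dot (R₀ : Type u) [CommRing R₀] (f : ℕ) (v : T3 f) (y : Fin f → Aring R₀ f) :
    ∑ i, y i * M1 R₀ f i v = y v.1.1 * xA R₀ f v.1.2.1 v.1.2.2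
      - y v.1.2.1 * xA R₀ f v.1.1 v.1.2.2 + y v.1.2.2 * xA R₀ f v.1.1 v.1.2.1 := by
  simp only [M1_apply, mul_add, Finset.sum_add_distrib, mul_ite, mul_zero, Finset.sum_ite_eq',
    Finset.sum_ite_eq, Finset.mem_univ, if_true]
  ring

/-! ### Exactness at `F*`: adjoining one more row and column -/

/-- Inclusion of the generic matrix of size `f` in that of size `f + 1`. -/
def incl (R₀ : Type u) [CommRing R₀] (f : ℕ) :
    MvPolynomial (P2 f) R₀ →ₐ[R₀] MvPolynomial (P2 (f + 1)) R₀ :=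
  MvPolynomial.aeval fun p => xv R₀ (f + 1) p.1.1.castSucc p.1.2.castSucc

lemma incl_xv (R₀ : Type u) [CommRing R₀] (f : ℕ) (i j : Fin f) :
    incl R₀ f (xv R₀ f i j) = xv R₀ (f + 1) i.castSucc j.castSucc := by
  rcases lt_trichotomy i j with h | h | h
  · have : xv R₀ f i j = MvPolynomial.X ⟨(i, j), h⟩ := by simp [xv, h]
    rw [this]; simp [incl]
  · subst h; simp [xv_self]
  · have : xv R₀ f j i = MvPolynomial.X ⟨(j, i), h⟩ := by simp [xv, h]
    rw [xv_anti R₀ f j i, xv_anti R₀ (f + 1) j.castSucc, this]; simp [incl]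

lemma incl_mem (R₀ : Type u) [CommRing R₀] [IsDomain R₀] (f : ℕ) {p : MvPolynomial (P2 f) R₀}
    (hp : p ∈ Pf4 R₀ f) : plu R₀ (f + 1) (incl R₀ f p) = 0 := by
  have : Pf4 R₀ f ≤ RingHom.ker ((plu R₀ (f + 1)).comp (incl R₀ f)) := by
    unfold Pf4
    rw [Ideal.span_le]
    rintro _ ⟨i, j, k, l, -, -, -, rfl⟩
    rw [SetLike.mem_coe, RingHom.mem_ker]
    simp only [AlgHom.comp_apply, pf4, map_add, map_sub, map_mul, incl_xv, plu_xv]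
    ring
  exact this hp

lemma exact_aux1 (R₀ : Type u) [CommRing R₀] [IsDomain R₀] (f : ℕ) {a b : Fin f} (hab : a < b)
    (c : Fin f → MvPolynomial (P2 f) R₀)
    (h0 : ∑ j, xv R₀ f a j * c j ∈ Pf4 R₀ f) (h1 : ∑ j, xv R₀ f b j * c j ∈ Pf4 R₀ f) :
    ∑ j, incl R₀ f (c j) * xv R₀ (f + 1) j.castSucc (Fin.last f) ∈ Pf4 R₀ (f + 1) := by
  rw [mem_iff]
  have h0' := incl_mem R₀ f h0
  have h1' := incl_mem R₀ f h1
  simp only [map_sum, map_mul, incl_xv] at h0' h1' ⊢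
  have hne := plu_xv_ne R₀ (f + 1) (Fin.castSucc_lt_castSucc_iff.mpr hab)
  refine (mul_eq_zero.mp ?_).resolve_left hne
  have key : ∀ j : Fin f, plu R₀ (f + 1) (xv R₀ (f + 1) a.castSucc b.castSucc) *
      (plu R₀ (f + 1) (incl R₀ f (c j)) * plu R₀ (f + 1) (xv R₀ (f + 1) j.castSucc (Fin.last f))) =
      plu R₀ (f + 1) (xv R₀ (f + 1) b.castSucc (Fin.last f)) *
        (plu R₀ (f + 1) (xv R₀ (f + 1) a.castSucc j.castSucc) * plu R₀ (f + 1) (incl R₀ f (c j)))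
      - plu R₀ (f + 1) (xv R₀ (f + 1) a.castSucc (Fin.last f)) *
        (plu R₀ (f + 1) (xv R₀ (f + 1) b.castSucc j.castSucc) *
          plu R₀ (f + 1) (incl R₀ f (c j))) := by
    intro j
    simp only [plu_xv]
    ring
  rw [Finset.mul_sum, Finset.sum_congr rfl fun j _ => key j, Finset.sum_sub_distrib,
    ← Finset.mul_sum, ← Finset.mul_sum, h0', h1', mul_zero, mul_zero, sub_zero]

section tsz

variable (R₀ : Type u) [CommRing R₀] (f : ℕ) {N : Type u} [AddCommGroup N]
  [Module (Aring R₀ f) N] [Module (Aring R₀ f)ᵐᵒᵖ N] [IsCentralScalar (Aring R₀ f) N]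
  (e : Fin f → N)

/-- The map to the trivial square zero extension, sending `x_{j,∞}` to `e_j`. -/
def tmap : MvPolynomial (P2 (f + 1)) R₀ →+* TrivSqZeroExt (Aring R₀ f) N :=
  MvPolynomial.eval₂Hom ((TrivSqZeroExt.inlHom (Aring R₀ f) N).comp (algebraMap R₀ (Aring R₀ f)))
    fun p => if h : (p.1.2 : ℕ) < f then
      TrivSqZeroExt.inl (xA R₀ f ⟨p.1.1, (Fin.lt_def.mp p.2).trans h⟩ ⟨p.1.2, h⟩)
    else TrivSqZeroExt.inr (e ⟨p.1.1, lt_of_lt_of_le (Fin.lt_def.mp p.2)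
      (Nat.lt_succ_iff.mp p.1.2.2)⟩)

lemma tmap_last (j : Fin f) :
    tmap R₀ f e (xv R₀ (f + 1) j.castSucc (Fin.last f)) = TrivSqZeroExt.inr (e j) := by
  simp [tmap, xv, Fin.castSucc_lt_last]

lemma tmap_xv (i j : Fin f) :
    tmap R₀ f e (xv R₀ (f + 1) i.castSucc j.castSucc) = TrivSqZeroExt.inl (xA R₀ f i j) := by
  have key : ∀ i j : Fin f, i < j →
      tmap R₀ f e (xv R₀ (f + 1) i.castSucc j.castSucc) = TrivSqZeroExt.inl (xA R₀ f i j) := by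
    intro i j h
    simp [tmap, xv, h]
  rcases lt_trichotomy i j with h | h | h
  · exact key i j h
  · subst h; simp [xv_self, xA_self]
  · rw [xv_anti R₀ (f + 1) j.castSucc, xA_anti R₀ f j i, map_neg, key j i h, TrivSqZeroExt.inl_neg]

lemma tmap_incl (p : MvPolynomial (P2 f) R₀) :
    tmap R₀ f e (incl R₀ f p) = TrivSqZeroExt.inl (Ideal.Quotient.mk _ p) := by
  have : (tmap R₀ f e).comp (incl R₀ f).toRingHom =
      (TrivSqZeroExt.inlHom (Aring R₀ f) N).comp (Ideal.Quotient.mk _) := by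
    apply MvPolynomial.ringHom_ext
    · intro r
      simp [tmap, TrivSqZeroExt.inlHom]
      rfl
    · intro p
      have h1 : (MvPolynomial.X p : MvPolynomial (P2 f) R₀) = xv R₀ f p.1.1 p.1.2 := by
        simp [xv, p.2]
      rw [h1]
      have := tmap_xv R₀ f e p.1.1 p.1.2
      rw [← incl_xv] at this
      exact this
  exact RingHom.congr_fun this p

lemma tmap_mem (he : ∀ i j k : Fin f, i < j → j < k →
      xA R₀ f j k • e i - xA R₀ f i k • e j + xA R₀ f i j • e k = 0)
    {p : MvPolynomial (P2 (f + 1)) R₀} (hp : p ∈ Pf4 R₀ (f + 1)) : tmap R₀ f e p = 0 := by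
  have : Pf4 R₀ (f + 1) ≤ RingHom.ker (tmap R₀ f e) := by
    refine Ideal.span_le.mpr ?_
    rintro _ ⟨i, j, k, l, hij, hjk, hkl, rfl⟩
    rw [SetLike.mem_coe, RingHom.mem_ker]
    obtain ⟨k, rfl⟩ := Fin.exists_castSucc_eq.mpr (Fin.ne_last_of_lt hkl)
    obtain ⟨j, rfl⟩ := Fin.exists_castSucc_eq.mpr (Fin.ne_last_of_lt hjk)
    obtain ⟨i, rfl⟩ := Fin.exists_castSucc_eq.mpr (Fin.ne_last_of_lt hij)
    rw [Fin.castSucc_lt_castSucc_iff] at hij hjk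
    by_cases hl : l = Fin.last f
    · subst hl
      simp only [pf4, map_add, map_sub, map_mul, tmap_last, tmap_xv, TrivSqZeroExt.inl_mul_inr,
        TrivSqZeroExt.inr_mul_inl, op_smul_eq_smul]
      rw [← TrivSqZeroExt.inr_sub, ← TrivSqZeroExt.inr_add]
      rw [← TrivSqZeroExt.inr_zero, ← he i j k hij hjk]
      congr 1
      abel
    · obtain ⟨l, rfl⟩ := Fin.exists_castSucc_eq.mpr hl
      rw [Fin.castSucc_lt_castSucc_iff] at hkl
      have h2 : pf4 R₀ (f + 1) i.castSucc j.castSucc k.castSucc l.castSucc =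
          incl R₀ f (pf4 R₀ f i j k l) := by
        simp only [pf4, map_add, map_sub, map_mul, incl_xv]
      rw [h2, tmap_incl, Ideal.Quotient.eq_zero_iff_mem.mpr, TrivSqZeroExt.inl_zero]
      exact Ideal.subset_span ⟨i, j, k, l, hij, hjk, hkl, rfl⟩
  exact this hp

lemma exact_aux2 [IsDomain R₀] (he : ∀ i j k : Fin f, i < j → j < k →
      xA R₀ f j k • e i - xA R₀ f i k • e j + xA R₀ f i j • e k = 0)
    {a b : Fin f} (hab : a < b) (c : Fin f → Aring R₀ f)
    (h0 : ∑ j, xA R₀ f a j * c j = 0) (h1 : ∑ j, xA R₀ f b j * c j = 0) :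
    ∑ j, c j • e j = 0 := by
  choose C hC using fun j => Ideal.Quotient.mk_surjective (c j)
  have hc : ∀ a, ∑ j, xA R₀ f a j * c j = 0 → ∑ j, xv R₀ f a j * C j ∈ Pf4 R₀ f := by
    intro a h
    rw [← Ideal.Quotient.eq_zero_iff_mem, ← h, map_sum]
    exact Finset.sum_congr rfl fun j _ => by rw [map_mul, hC]; rfl
  have h := tmap_mem R₀ f e he (exact_aux1 R₀ f hab C (hc a h0) (hc b h1))
  simp only [map_sum, map_mul, tmap_last, tmap_incl, hC, TrivSqZeroExt.inl_mul_inr] at h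
  rw [← TrivSqZeroExt.inr_sum, ← TrivSqZeroExt.inr_zero] at h
  exact TrivSqZeroExt.inr_injective h

end tsz

lemma exact1 (R₀ : Type u) [CommRing R₀] [IsDomain R₀] (f : ℕ) {a b : Fin f} (hab : a < b)
    (c : Fin f → Aring R₀ f)
    (h0 : ∑ j, xA R₀ f a j * c j = 0) (h1 : ∑ j, xA R₀ f b j * c j = 0) :
    c ∈ LinearMap.range (M1 R₀ f).mulVecLin := by
  set W := LinearMap.range (M1 R₀ f).mulVecLin with hW
  have h := exact_aux2 R₀ f (N := (Fin f → Aring R₀ f) ⧸ W)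
    (fun j => W.mkQ (Pi.single j 1)) ?_ hab c h0 h1
  · simp only [← map_smul, ← map_sum] at h
    rw [Submodule.mkQ_apply, Submodule.Quotient.mk_eq_zero] at h
    convert h using 1
    exact pi_eq_sum_univ' c |>.trans (Finset.sum_congr rfl fun j _ => by
      congr 1)
  · intro i j k hij hjk
    simp only [← map_smul, ← map_sub, ← map_add]
    rw [Submodule.mkQ_apply, Submodule.Quotient.mk_eq_zero, hW]
    refine ⟨Pi.single ⟨(i, j, k), hij, hjk⟩ 1, ?_⟩
    rw [Matrix.mulVecLin_apply, Matrix.mulVec_single_one]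
    ext t
    rw [Matrix.col_apply, M1_apply]
    simp only [Pi.add_apply, Pi.sub_apply, Pi.smul_apply, Pi.single_apply, smul_eq_mul, mul_ite,
      mul_one, mul_zero]
    split_ifs <;> ring

/-! ### Exactness at `A³` -/

/-- Killing the variables `x_{a,j}`. -/
def kil (R₀ : Type u) [CommRing R₀] (f : ℕ) (a : Fin f) :
    MvPolynomial (P2 f) R₀ →ₐ[R₀] MvPolynomial (P2 f) R₀ :=
  MvPolynomial.aeval fun p => if p.1.1 = a then 0 else MvPolynomial.X p

lemma kil_xv (R₀ : Type u) [CommRing R₀] (f : ℕ) (a i j : Fin f) (hij : i < j) :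
    kil R₀ f a (xv R₀ f i j) = if i = a then 0 else xv R₀ f i j := by
  have : xv R₀ f i j = MvPolynomial.X ⟨(i, j), hij⟩ := by simp [xv, hij]
  rw [this]
  simp [kil]

lemma kil_mem (R₀ : Type u) [CommRing R₀] (f : ℕ) (a : Fin f) (ha : ∀ j, a ≤ j)
    {p : MvPolynomial (P2 f) R₀} (hp : p ∈ Pf4 R₀ f) : kil R₀ f a p ∈ Pf4 R₀ f := by
  have : Pf4 R₀ f ≤ (Pf4 R₀ f).comap (kil R₀ f a) := by
    conv_lhs => unfold Pf4
    rw [Ideal.span_le]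
    rintro _ ⟨i, j, k, l, hij, hjk, hkl, rfl⟩
    rw [SetLike.mem_coe, Ideal.mem_comap]
    have hja : j ≠ a := (lt_of_le_of_lt (ha i) hij).ne'
    have hka : k ≠ a := (lt_of_le_of_lt (ha j) hjk).ne'
    simp only [pf4, map_add, map_sub, map_mul, kil_xv R₀ f a _ _ hij, kil_xv R₀ f a _ _ hkl,
      kil_xv R₀ f a _ _ (hij.trans hjk), kil_xv R₀ f a _ _ (hjk.trans hkl),
      kil_xv R₀ f a _ _ (hij.trans (hjk.trans hkl)), kil_xv R₀ f a _ _ hjk, hja, hka, if_false]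
    by_cases hi : i = a
    · simp [hi]
    · simp only [hi, if_false]
      exact Ideal.subset_span ⟨i, j, k, l, hij, hjk, hkl, rfl⟩
  exact this hp

lemma sub_kil (R₀ : Type u) [CommRing R₀] (f : ℕ) (a : Fin f) (p : MvPolynomial (P2 f) R₀) :
    p - kil R₀ f a p ∈ Ideal.span (Set.range fun j => xv R₀ f a j) := by
  set J := Ideal.span (Set.range fun j => xv R₀ f a j) with hJ
  have : (Ideal.Quotient.mkₐ R₀ J) = (Ideal.Quotient.mkₐ R₀ J).comp (kil R₀ f a) := by
    apply MvPolynomial.algHom_ext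
    intro p
    rw [AlgHom.comp_apply]
    simp only [kil, MvPolynomial.aeval_X]
    split_ifs with h
    · rw [map_zero, Ideal.Quotient.mkₐ_eq_mk, Ideal.Quotient.eq_zero_iff_mem]
      refine Ideal.subset_span ⟨p.1.2, ?_⟩
      have := p.2
      rw [h] at this
      subst h
      simp [xv, p.2]
    · rfl
  rw [← Ideal.Quotient.eq]
  exact AlgHom.congr_fun this p

lemma exact2_step1 (R₀ : Type u) [CommRing R₀] [IsDomain R₀] (f : ℕ) (a b c : Fin f)
    (ha : ∀ j, a ≤ j) (hab : a < b) (hbc : b < c) (u v w : Aring R₀ f)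
    (h : u * xA R₀ f b c - v * xA R₀ f a c + w * xA R₀ f a b = 0) :
    ∃ y : Fin f → Aring R₀ f, u = ∑ j, xA R₀ f a j * y j := by
  obtain ⟨U, rfl⟩ := Ideal.Quotient.mk_surjective u
  obtain ⟨V, rfl⟩ := Ideal.Quotient.mk_surjective v
  obtain ⟨W, rfl⟩ := Ideal.Quotient.mk_surjective w
  simp only [xA, ← map_mul, ← map_sub, ← map_add] at h
  rw [Ideal.Quotient.eq_zero_iff_mem] at h
  have h1 := kil_mem R₀ f a ha h
  simp only [map_mul, map_sub, map_add, kil_xv R₀ f a _ _ hbc, kil_xv R₀ f a _ _ hab,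
    kil_xv R₀ f a _ _ (hab.trans hbc), if_true, hab.ne', if_false, mul_zero, sub_zero,
    add_zero] at h1
  rw [mem_iff, map_mul] at h1
  have h2 := (mul_eq_zero.mp h1).resolve_right (plu_xv_ne R₀ f hbc)
  rw [← mkA_eq_zero] at h2
  obtain ⟨y, hy⟩ := Ideal.mem_span_range_iff_exists_fun.mp (sub_kil R₀ f a U)
  refine ⟨fun j => Ideal.Quotient.mk _ (y j), ?_⟩
  have h3 := congrArg (Ideal.Quotient.mk (Pf4 R₀ f)) hy
  rw [map_sub, h2, sub_zero, map_sum] at h3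
  rw [← h3]
  exact Finset.sum_congr rfl fun j _ => by rw [map_mul, mul_comm]; rfl

lemma std_add {f : ℕ} (d : P2 f →₀ ℕ) (hd : Std d) (p : P2 f) (h0 : (p.1.1 : ℕ) = 0)
    (h2 : (p.1.2 : ℕ) ≤ 2) : Std (d + Finsupp.single p 1) := by
  classical
  have key : ∀ r : P2 f, (d + Finsupp.single p 1 : P2 f →₀ ℕ) r ≠ 0 → d r ≠ 0 ∨ r = p := by
    intro r hr
    by_contra! hc
    apply hr
    rw [Finsupp.add_apply, hc.1, Finsupp.single_apply, if_neg (Ne.symm hc.2), add_zero]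
  intro r s hr hs hrs
  rcases key r hr with h | h
  · rcases key s hs with h' | h'
    · exact hd r s h h' hrs
    · subst h'
      have := Fin.lt_def.mp hrs
      omega
  · subst h
    have h3 := Fin.lt_def.mp hrs
    have h4 := Fin.lt_def.mp s.2
    rw [Fin.le_def]
    omega

lemma exact2_step2 (R₀ : Type u) [CommRing R₀] [IsDomain R₀] (f : ℕ) (a b c : Fin f)
    (ha : (a : ℕ) = 0) (hb : (b : ℕ) = 1) (hc : (c : ℕ) = 2) (v w : Aring R₀ f)
    (h : v * xA R₀ f a c = w * xA R₀ f a b) :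
    ∃ y : Aring R₀ f, v = xA R₀ f a b * y ∧ w = xA R₀ f a c * y := by
  classical
  have hab : a < b := Fin.lt_def.mpr (by omega)
  have hac : a < c := Fin.lt_def.mpr (by omega)
  have lift : ∀ v : Aring R₀ f, ∃ q : MvPolynomial (P2 f) R₀, (∀ d ∈ q.support, Std d) ∧
      Ideal.Quotient.mk _ q = v := by
    intro v
    obtain ⟨V, rfl⟩ := Ideal.Quotient.mk_surjective v
    obtain ⟨q, hq, hq'⟩ := exists_std R₀ f V
    exact ⟨q, hq, (Ideal.Quotient.eq.mpr hq').symm⟩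
  obtain ⟨V, hV, hVv⟩ := lift v
  obtain ⟨W, hW, hWw⟩ := lift w
  have eab : xv R₀ f a b = MvPolynomial.X ⟨(a, b), hab⟩ := by simp [xv, hab]
  have eac : xv R₀ f a c = MvPolynomial.X ⟨(a, c), hac⟩ := by simp [xv, hac]
  have hz : V * MvPolynomial.X ⟨(a, c), hac⟩ - W * MvPolynomial.X ⟨(a, b), hab⟩ = 0 := by
    apply std_zero R₀ f
    · intro d hd
      rcases Finset.mem_union.mp (MvPolynomial.support_sub _ _ _ hd) with h | h
      · rw [MvPolynomial.support_mul_X, Finset.mem_map] at h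
        obtain ⟨d, hd', rfl⟩ := h
        exact std_add d (hV d hd') _ ha (by simp [hc])
      · rw [MvPolynomial.support_mul_X, Finset.mem_map] at h
        obtain ⟨d, hd', rfl⟩ := h
        exact std_add d (hW d hd') _ ha (by simp [hb])
    · rw [← mkA_eq_zero, ← eab, ← eac, map_sub, map_mul, map_mul, hVv, hWw]
      exact sub_eq_zero.mpr h
  have hdvd : (MvPolynomial.X ⟨(a, b), hab⟩ : MvPolynomial (P2 f) R₀) ∣
      V * MvPolynomial.X ⟨(a, c), hac⟩ := by
    rw [sub_eq_zero.mp hz]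
    exact Dvd.intro_left _ rfl
  rcases MvPolynomial.X_prime.dvd_or_dvd hdvd with h1 | h1
  · obtain ⟨y, rfl⟩ := h1
    have hv : v = xA R₀ f a b * Ideal.Quotient.mk _ y := by
      rw [← hVv, map_mul, ← eab]; rfl
    refine ⟨Ideal.Quotient.mk _ y, hv, ?_⟩
    rw [← sub_eq_zero]
    apply xA_cancel R₀ f hab
    rw [hv] at h
    linear_combination -h
  · rw [MvPolynomial.X_dvd_X] at h1
    have : b = c := congrArg (fun z : P2 f => z.1.2) h1
    rw [this] at hb
    omega

/-- for a Noetherian domain `R₀` and `f ≥ 3`, the sequence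
`⋀³F* → F* → A³ → A → A' → 0` is exact, where the first map is `d₁`, the
second is given by the first three rows of `-X`, the third by the row vector
`[x_{2,3}, -x_{1,3}, x_{1,2}]`, and `A' = A/(x_{1,2}, x_{2,3}, x_{1,3})`.
(Exactness of `⋀³F* → F* → A³` says precisely that the induced map from
`N = coker d₁` to `A³` is injective, i.e. `0 → N → A³ → A → A' → 0` is exact.) -/
theorem stmt_6 (R₀ : Type u) [CommRing R₀] [IsDomain R₀] [IsNoetherianRing R₀]
    (f : ℕ) (hf : 3 ≤ f) :
    letI A := Aring R₀ f
    letI x : Fin f → Fin f → A := xA R₀ f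
    letI i0 : Fin f := ⟨0, by omega⟩
    letI i1 : Fin f := ⟨1, by omega⟩
    letI i2 : Fin f := ⟨2, by omega⟩
    letI d1 : (T3 f → A) →ₗ[A] (Fin f → A) := (M1 R₀ f).mulVecLin
    letI d0' : (Fin f → A) →ₗ[A] (Fin 3 → A) :=
      (Matrix.of fun (r : Fin 3) (j : Fin f) =>
        - x (Fin.castLE hf r) j).mulVecLin
    letI ρ : (Fin 3 → A) →ₗ[A] A :=
      (LinearMap.proj (0 : Fin 1)).comp
        (Matrix.of fun (_ : Fin 1) (r : Fin 3) =>
          if r = 0 then x i1 i2 else if r = 1 then - x i0 i2 else x i0 i1).mulVecLin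
    letI A' := A ⧸ Ideal.span ({x i0 i1, x i1 i2, x i0 i2} : Set A)
    letI π : A →+* A' := Ideal.Quotient.mk _
    Function.Exact d1 d0' ∧ Function.Exact d0' ρ ∧ Function.Exact ρ π ∧
      Function.Surjective π := by
  let i0 : Fin f := ⟨0, by omega⟩
  let i1 : Fin f := ⟨1, by omega⟩
  let i2 : Fin f := ⟨2, by omega⟩
  let d1 : (T3 f → Aring R₀ f) →ₗ[Aring R₀ f] (Fin f → Aring R₀ f) := (M1 R₀ f).mulVecLin
  let d0' : (Fin f → Aring R₀ f) →ₗ[Aring R₀ f] (Fin 3 → Aring R₀ f) :=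
    (Matrix.of fun (r : Fin 3) (j : Fin f) =>
      - xA R₀ f (Fin.castLE hf r) j).mulVecLin
  let ρ : (Fin 3 → Aring R₀ f) →ₗ[Aring R₀ f] Aring R₀ f :=
    (LinearMap.proj (0 : Fin 1)).comp
      (Matrix.of fun (_ : Fin 1) (r : Fin 3) =>
        if r = 0 then xA R₀ f i1 i2 else if r = 1 then - xA R₀ f i0 i2 else xA R₀ f i0 i1).mulVecLin
  let π : Aring R₀ f →+* Aring R₀ f ⧸ Ideal.span ({xA R₀ f i0 i1, xA R₀ f i1 i2, xA R₀ f i0 i2} : Set (Aring R₀ f)) := Ideal.Quotient.mk _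
  change Function.Exact d1 d0' ∧ Function.Exact d0' ρ ∧ Function.Exact ρ π ∧
      Function.Surjective π
  have h01 : i0 < i1 := Fin.lt_def.mpr Nat.zero_lt_one
  have h12 : i1 < i2 := Fin.lt_def.mpr Nat.one_lt_two
  have hd0 : ∀ (c : Fin f → Aring R₀ f) (r : Fin 3), d0' c r = - ∑ j, xA R₀ f (Fin.castLE hf r) j * c j := by
    intro c r
    rw [← Finset.sum_neg_distrib]
    simp only [d0', Matrix.mulVecLin_apply, Matrix.mulVec, dotProduct, Matrix.of_apply]
    exact Finset.sum_congr rfl fun j _ => by ring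
  have hρ : ∀ a : Fin 3 → Aring R₀ f, ρ a = xA R₀ f i1 i2 * a 0 - xA R₀ f i0 i2 * a 1 + xA R₀ f i0 i1 * a 2 := by
    intro a
    simp [ρ, Matrix.mulVec, dotProduct, Fin.sum_univ_three]
    ring
  have c0 : Fin.castLE hf 0 = i0 := rfl
  have c1 : Fin.castLE hf 1 = i1 := rfl
  have c2 : Fin.castLE hf 2 = i2 := rfl
  have hrel : ∀ y : Fin f → Aring R₀ f, xA R₀ f i1 i2 * (∑ j, xA R₀ f i0 j * y j) - xA R₀ f i0 i2 * (∑ j, xA R₀ f i1 j * y j)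
      + xA R₀ f i0 i1 * (∑ j, xA R₀ f i2 j * y j) = 0 := by
    intro y
    rw [Finset.mul_sum, Finset.mul_sum, Finset.mul_sum, ← Finset.sum_sub_distrib,
      ← Finset.sum_add_distrib]
    refine Finset.sum_eq_zero fun j _ => ?_
    linear_combination y j * xA_pf R₀ f i0 i1 i2 j
  refine ⟨?_, ?_, ?_, Ideal.Quotient.mk_surjective⟩
  · intro c
    constructor
    · intro h
      have h0 := congrFun h 0
      have h1 := congrFun h 1
      rw [hd0, Pi.zero_apply, neg_eq_zero] at h0 h1
      exact exact1 R₀ f h01 c h0 h1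
    · rintro ⟨z, rfl⟩
      ext r
      rw [hd0, Pi.zero_apply, neg_eq_zero]
      have : ∀ j, d1 z j = ∑ v, M1 R₀ f j v * z v := fun j => rfl
      simp only [this, Finset.mul_sum]
      rw [Finset.sum_comm]
      refine Finset.sum_eq_zero fun v _ => ?_
      simp only [← mul_assoc]
      rw [← Finset.sum_mul, M1_dot R₀ f v (fun j => xA R₀ f (Fin.castLE hf r) j)]
      have := xA_pf R₀ f (Fin.castLE hf r) v.1.1 v.1.2.1 v.1.2.2
      exact mul_eq_zero_of_left this _
  · intro a
    constructor
    · intro h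
      rw [hρ] at h
      obtain ⟨y, hy⟩ := exact2_step1 R₀ f i0 i1 i2 (fun j => Fin.le_def.mpr (Nat.zero_le _)) h01 h12
        (a 0) (a 1) (a 2) (by linear_combination h)
      obtain ⟨z, hz1, hz2⟩ := exact2_step2 R₀ f i0 i1 i2 rfl rfl rfl
        (a 1 - ∑ j, xA R₀ f i1 j * y j) (a 2 - ∑ j, xA R₀ f i2 j * y j) (by
          have h3 := hrel y
          have hy' : a 0 = ∑ j, xA R₀ f i0 j * y j := hy
          rw [← hy'] at h3
          linear_combination h3 - h)
      have hs : ∀ r, ∑ j, xA R₀ f r j * ((Pi.single i0 z : Fin f → Aring R₀ f) j) = xA R₀ f r i0 * z := by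
        intro r
        simp [Pi.single_apply]
      refine ⟨- y + Pi.single i0 z, ?_⟩
      have hv : ∀ r, d0' (- y + Pi.single i0 z) r =
          (∑ j, xA R₀ f (Fin.castLE hf r) j * y j) - xA R₀ f (Fin.castLE hf r) i0 * z := by
        intro r
        rw [hd0, ← hs, ← Finset.sum_sub_distrib, ← Finset.sum_neg_distrib]
        refine Finset.sum_congr rfl fun j _ => ?_
        rw [Pi.add_apply, Pi.neg_apply]
        ring
      ext r
      rw [hv]
      fin_cases r
      · change (∑ j, xA R₀ f i0 j * y j) - xA R₀ f i0 i0 * z = a 0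
        rw [hy]
        have : xA R₀ f i0 i0 = 0 := xA_self R₀ f i0
        rw [this, zero_mul, sub_zero]
      · change (∑ j, xA R₀ f i1 j * y j) - xA R₀ f i1 i0 * z = a 1
        have : xA R₀ f i1 i0 = - xA R₀ f i0 i1 := xA_anti R₀ f i0 i1
        rw [this]
        linear_combination -hz1
      · change (∑ j, xA R₀ f i2 j * y j) - xA R₀ f i2 i0 * z = a 2
        have : xA R₀ f i2 i0 = - xA R₀ f i0 i2 := xA_anti R₀ f i0 i2
        rw [this]
        linear_combination -hz2
    · rintro ⟨c, rfl⟩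
      rw [hρ, hd0, hd0, hd0, c0, c1, c2]
      linear_combination - hrel c
  · intro a
    change Ideal.Quotient.mk _ a = 0 ↔ _
    rw [Ideal.Quotient.eq_zero_iff_mem, Submodule.mem_span_triple]
    constructor
    · rintro ⟨p, q, r, h⟩
      refine ⟨![q, -r, p], ?_⟩
      rw [hρ, ← h]
      simp
      ring
    · rintro ⟨b, rfl⟩
      refine ⟨b 2, b 0, - b 1, ?_⟩
      rw [hρ]
      simp
      ring

end AluffiStmt
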